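/- Let μ be a finite positive Borel measure on [0,1). Then the operator H_μ is well defined on the Hardy space H^1 and bounded from H^1 into itself if and only if μ is a 1-logarithmic 1-Carleson measure. -/

import Mathlib

open MeasureTheory Set Metric ENNReal

noncomputable section

namespace PaperHankel

/-- The moment of order `n` of a measure on `[0,1)`:  `μ_n = ∫_{[0,1)} t^n dμ(t)`. -/
def mom (μ : Measure ℝ) (n : ℕ) : ℝ := ∫ t in Ico (0:ℝ) 1, t ^ n ∂μ

/-- The `n`-th Taylor coefficient of `f` at `0`. -/
def tc (f : ℂ → ℂ) (n : ℕ) : ℂ := iteratedDeriv n f 0 / n.factorial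

/-- The `n`-th Taylor coefficient of `H_μ f`, namely `∑_k μ_{n+k} a_k`. -/
def hmuCoeff (μ : Measure ℝ) (f : ℂ → ℂ) (n : ℕ) : ℂ :=
  ∑' k : ℕ, (mom μ (n + k) : ℂ) * tc f k

/-- `H_μ f` is well defined: each coefficient series converges absolutely, and the resulting
power series has radius of convergence at least `1`. -/
def HmuWD (μ : Measure ℝ) (f : ℂ → ℂ) : Prop :=
  (∀ n : ℕ, Summable fun k : ℕ => ‖(mom μ (n + k) : ℂ) * tc f k‖) ∧
  ∀ z ∈ ball (0:ℂ) 1, Summable fun n : ℕ => ‖hmuCoeff μ f n * z ^ n‖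

/-- The generalized Hilbert operator induced by the Hankel matrix of moments of `μ`. -/
def Hmu (μ : Measure ℝ) (f : ℂ → ℂ) : ℂ → ℂ :=
  fun z => ∑' n : ℕ, hmuCoeff μ f n * z ^ n

/-- `I_μ f` is well defined: the defining integral converges absolutely for every `z ∈ 𝔻`. -/
def ImuWD (μ : Measure ℝ) (f : ℂ → ℂ) : Prop :=
  ∀ z ∈ ball (0:ℂ) 1, IntegrableOn (fun t : ℝ => f t / (1 - t * z)) (Ico (0:ℝ) 1) μ

/-- The integral operator `I_μ f (z) = ∫_{[0,1)} f(t)/(1-tz) dμ(t)`. -/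
def Imu (μ : Measure ℝ) (f : ℂ → ℂ) : ℂ → ℂ :=
  fun z => ∫ t in Ico (0:ℝ) 1, f t / (1 - t * z) ∂μ

/-- The `p`-th circle mean `M_p(r,f)` raised into the Hardy norm shape:
`((1/2π) ∫_0^{2π} |f(r e^{iθ})|^p dθ)^{1/p}`. -/
def circMean (p : ℝ) (f : ℂ → ℂ) (r : ℝ) : ℝ :=
  ((2 * Real.pi)⁻¹ * ∫ θ in (0:ℝ)..(2 * Real.pi),
      ‖f (r * Complex.exp (θ * Complex.I))‖ ^ p) ^ (1 / p)

/-- Membership in the Hardy space `H^p`. -/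
def MemHardy (p : ℝ) (f : ℂ → ℂ) : Prop :=
  DifferentiableOn ℂ f (ball (0:ℂ) 1) ∧ ∃ M : ℝ, ∀ r ∈ Ico (0:ℝ) 1, circMean p f r ≤ M

/-- The `H^p` norm. -/
def hardyNorm (p : ℝ) (f : ℂ → ℂ) : ℝ :=
  sSup {x : ℝ | ∃ r ∈ Ico (0:ℝ) 1, x = circMean p f r}

/-- Membership in `H^∞`: analytic and bounded on the unit disc. -/
def MemHinf (f : ℂ → ℂ) : Prop :=
  DifferentiableOn ℂ f (ball (0:ℂ) 1) ∧ ∃ M : ℝ, ∀ z ∈ ball (0:ℂ) 1, ‖f z‖ ≤ M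

/-- The `H^∞` norm. -/
def hinfNorm (f : ℂ → ℂ) : ℝ := sSup {x : ℝ | ∃ z ∈ ball (0:ℂ) 1, x = ‖f z‖}

/-- The mean `M_2(r,g) = ((1/2π) ∫_0^{2π} |g(r e^{iθ})|² dθ)^{1/2}`. -/
def M2 (g : ℂ → ℂ) (r : ℝ) : ℝ :=
  Real.sqrt ((2 * Real.pi)⁻¹ * ∫ θ in (0:ℝ)..(2 * Real.pi),
      ‖g (r * Complex.exp (θ * Complex.I))‖ ^ 2)

/-- Membership in the mean Lipschitz space `Λ²_{1/2}`:
`M_2(r,f') = O((1-r)^{-1/2})` as `r → 1⁻`. -/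
def MemLambda (f : ℂ → ℂ) : Prop :=
  DifferentiableOn ℂ f (ball (0:ℂ) 1) ∧
  ∃ C : ℝ, ∀ r ∈ Ico (0:ℝ) 1, Real.sqrt (1 - r) * M2 (deriv f) r ≤ C

/-- The norm on `Λ²_{1/2}`. -/
def lambdaNorm (f : ℂ → ℂ) : ℝ :=
  ‖f 0‖ + sSup {x : ℝ | ∃ r ∈ Ico (0:ℝ) 1, x = Real.sqrt (1 - r) * M2 (deriv f) r}

/-- `∫_𝔻 |f'(z)|² g(z,a)^s dA(z)` with `g(z,a) = log |(1- ā z)/(z-a)|` and `dA` the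
normalized area measure, computed as a lower integral in `[0,∞]`. -/
def qsInt (s : ℝ) (f : ℂ → ℂ) (a : ℂ) : ℝ≥0∞ :=
  (ENNReal.ofReal Real.pi)⁻¹ * ∫⁻ z in ball (0:ℂ) 1,
    ENNReal.ofReal (‖deriv f z‖ ^ 2 * (Real.log ‖(1 - (starRingEnd ℂ) a * z) / (z - a)‖) ^ s)

/-- Membership in `Q_s`: analytic on `𝔻` with `ρ_{Q_s}(f)² = sup_{a ∈ 𝔻} ∫ ... < ∞`. -/
def MemQs (s : ℝ) (f : ℂ → ℂ) : Prop :=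
  DifferentiableOn ℂ f (ball (0:ℂ) 1) ∧ (⨆ a ∈ ball (0:ℂ) 1, qsInt s f a) < ⊤

/-- The norm on `Q_s`, `‖f‖ = |f(0)| + ρ_{Q_s}(f)`. -/
def qsNorm (s : ℝ) (f : ℂ → ℂ) : ℝ :=
  ‖f 0‖ + Real.sqrt (⨆ a ∈ ball (0:ℂ) 1, qsInt s f a).toReal

/-- The condition `∫_{[0,1)} tⁿ log(1/(1-t)) dμ(t) = O(1/n)`, stated with the lower
integral so that in particular the integrals are finite. -/
def LogMomentBigO (μ : Measure ℝ) : Prop :=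
  ∃ C > 0, ∀ n : ℕ, 1 ≤ n →
    (∫⁻ t in Ico (0:ℝ) 1, ENNReal.ofReal (t ^ n * Real.log (1 / (1 - t))) ∂μ) ≤
      ENNReal.ofReal (C / n)

/-- Membership in the Bloch space. -/
def MemBloch (f : ℂ → ℂ) : Prop :=
  DifferentiableOn ℂ f (ball (0:ℂ) 1) ∧
  ∃ M : ℝ, ∀ z ∈ ball (0:ℂ) 1, (1 - ‖z‖ ^ 2) * ‖deriv f z‖ ≤ M

/-- The Bloch norm `‖f‖ = |f(0)| + ρ_B(f)`. -/
def blochNorm (f : ℂ → ℂ) : ℝ :=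
  ‖f 0‖ + sSup {x : ℝ | ∃ z ∈ ball (0:ℂ) 1, x = (1 - ‖z‖ ^ 2) * ‖deriv f z‖}

/-- Membership in the Besov space `B^p`. -/
def MemBesov (p : ℝ) (f : ℂ → ℂ) : Prop :=
  DifferentiableOn ℂ f (ball (0:ℂ) 1) ∧
  IntegrableOn (fun z : ℂ => (1 - ‖z‖ ^ 2) ^ (p - 2) * ‖deriv f z‖ ^ p) (ball (0:ℂ) 1) volume

/-- The Besov norm `‖f‖ = |f(0)| + ρ_p(f)`. -/
def besovNorm (p : ℝ) (f : ℂ → ℂ) : ℝ :=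
  ‖f 0‖ + (Real.pi⁻¹ *
    ∫ z in ball (0:ℂ) 1, (1 - ‖z‖ ^ 2) ^ (p - 2) * ‖deriv f z‖ ^ p) ^ (1 / p)

/-- `μ` is an `α`-logarithmic `s`-Carleson measure on `[0,1)`. -/
def IsLogCarleson (μ : Measure ℝ) (α s : ℝ) : Prop :=
  ∃ C > 0, ∀ t ∈ Ico (0:ℝ) 1,
    (μ (Ico t 1)).toReal * Real.log (2 / (1 - t)) ^ α ≤ C * (1 - t) ^ s

/-- `μ` is an `s`-Carleson measure on `[0,1)`. -/
def IsCarleson (μ : Measure ℝ) (s : ℝ) : Prop :=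
  ∃ C > 0, ∀ t ∈ Ico (0:ℝ) 1, (μ (Ico t 1)).toReal ≤ C * (1 - t) ^ s

open Filter Topology Complex in
lemma ps_onBall {c : ℕ → ℂ} {f : ℂ → ℂ}
    (h : ∀ z ∈ ball (0:ℂ) 1, HasSum (fun n => c n * z ^ n) (f z)) :
    HasFPowerSeriesOnBall f (FormalMultilinearSeries.ofScalars ℂ c) 0 1 := by
  refine ⟨?_, by norm_num, ?_⟩
  · refine ENNReal.le_of_forall_nnreal_lt (fun r hr => ?_)
    have hr1 : (r:ℝ) < 1 := by exact_mod_cast hr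
    apply FormalMultilinearSeries.le_radius_of_summable_norm
    have := (h ((r:ℝ):ℂ) (by simp [hr1])).summable.norm
    refine this.congr fun n => ?_
    simp
  · intro y hy
    have hy' : y ∈ ball (0:ℂ) 1 := by
      rw [← Metric.eball_ofReal] at *; simpa using hy
    simpa [FormalMultilinearSeries.ofScalars_apply_eq, mul_comm] using h y hy'

lemma ps_unique {c d : ℕ → ℂ} {f : ℂ → ℂ}
    (h : ∀ z ∈ ball (0:ℂ) 1, HasSum (fun n => c n * z ^ n) (f z))
    (h' : ∀ z ∈ ball (0:ℂ) 1, HasSum (fun n => d n * z ^ n) (f z)) : c = d := by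
  have := (ps_onBall h).hasFPowerSeriesAt.eq_formalMultilinearSeries
    (ps_onBall h').hasFPowerSeriesAt
  exact FormalMultilinearSeries.ofScalars_series_injective ℂ ℂ this

lemma ps_diff {c : ℕ → ℂ} {f : ℂ → ℂ}
    (h : ∀ z ∈ ball (0:ℂ) 1, HasSum (fun n => c n * z ^ n) (f z)) :
    DifferentiableOn ℂ f (ball (0:ℂ) 1) := by
  have := (ps_onBall h).differentiableOn
  rwa [← ENNReal.ofReal_one, Metric.eball_ofReal] at this

lemma tc_hasSum {f : ℂ → ℂ} (hf : DifferentiableOn ℂ f (ball (0:ℂ) 1)) :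
    ∀ z ∈ ball (0:ℂ) 1, HasSum (fun n => tc f n * z ^ n) (f z) := by
  intro z hz
  have := Complex.hasSum_taylorSeries_on_ball hf hz
  refine this.congr_fun ?_
  intro n
  simp [tc]; ring

def GoodF (F : ℂ → ℂ) : Prop := ∃ g h : ℂ → ℂ, DiffContOnCl ℂ g (ball 0 1) ∧
  DiffContOnCl ℂ h (ball 0 1) ∧ (∀ z ∈ closedBall (0:ℂ) 1, F z = g z * h z) ∧
  ∀ z, ‖z‖ = 1 → ‖g z‖ ^ 2 = ‖F z‖ ∧ ‖h z‖ ^ 2 = ‖F z‖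

lemma GoodF.mul {F G : ℂ → ℂ} (hF : GoodF F) (hG : GoodF G) : GoodF (fun z => F z * G z) := by
  obtain ⟨g, h, hg, hh, e, b⟩ := hF
  obtain ⟨g', h', hg', hh', e', b'⟩ := hG
  refine ⟨fun z => g z * g' z, fun z => h z * h' z, ?_, ?_, ?_, ?_⟩
  · exact hg.smul hg'
  · exact hh.smul hh'
  · intro z hz; simp only [e z hz, e' z hz]; ring
  · intro z hz
    simp only [norm_mul, mul_pow, (b z hz).1, (b' z hz).1, (b z hz).2, (b' z hz).2, and_self]

lemma GoodF.congr {F G : ℂ → ℂ} (hF : GoodF F) (h : ∀ z ∈ closedBall (0:ℂ) 1, F z = G z) :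
    GoodF G := by
  obtain ⟨g, k, hg, hk, e, b⟩ := hF
  refine ⟨g, k, hg, hk, fun z hz => (h z hz) ▸ e z hz, fun z hz => ?_⟩
  rw [← h z (by simp [hz])]; exact b z hz

lemma GoodF.of_sq {F g : ℂ → ℂ} (hg : DiffContOnCl ℂ g (ball 0 1)) (h : ∀ z, F z = g z ^ 2) :
    GoodF F :=
  ⟨g, g, hg, hg, fun z _ => by rw [h z]; ring, fun z _ => by rw [h z]; simp⟩

lemma csqrt (a : ℂ) : a = (a ^ (1/2 : ℂ)) ^ 2 := by
  rw [← Complex.cpow_nat_mul]; simp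

lemma GoodF.const (a : ℂ) : GoodF (fun _ => a) :=
  GoodF.of_sq (g := fun _ => a ^ (1/2 : ℂ)) diffContOnCl_const (fun _ => csqrt a)

lemma GoodF.one_sub {u : ℂ} (hu : ‖u‖ ≤ 1) : GoodF (fun z => 1 - u * z) := by
  refine GoodF.of_sq (g := fun z => (1 - u * z) ^ (1/2 : ℂ)) ⟨?_, ?_⟩ (fun z => csqrt _)
  · intro z hz
    have : ‖u * z‖ < 1 := by
      rw [norm_mul]; have : ‖z‖ < 1 := by simpa using hz
      nlinarith [norm_nonneg u, norm_nonneg z]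
    apply DifferentiableAt.differentiableWithinAt
    refine DifferentiableAt.cpow (by fun_prop) (by fun_prop) ?_
    left
    have := (Complex.abs_re_le_norm (u*z)); rw [abs_le] at this
    simp only [Complex.sub_re, Complex.one_re]; linarith [this.2]
  · rw [closure_ball _ one_ne_zero]
    intro z hz
    have hz1 : ‖u * z‖ ≤ 1 := by
      rw [norm_mul]; have : ‖z‖ ≤ 1 := by simpa using hz
      nlinarith [norm_nonneg u, norm_nonneg z]
    apply ContinuousAt.continuousWithinAt
    have hc : ContinuousAt (fun z => 1 - u * z) z := by fun_prop
    refine ContinuousAt.comp (g := fun w : ℂ => w ^ (1/2:ℂ)) (f := fun z => 1 - u * z) ?_ hc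
    by_cases h0 : 1 - u * z = 0
    · rw [h0]
      exact ContinuousAt.comp (f := fun w : ℂ => (w, (1/2:ℂ))) (x := (0:ℂ))
        (Complex.continuousAt_cpow_zero_of_re_pos (z := 1/2) (by norm_num)) (by fun_prop)
    · apply continuousAt_cpow_const
      by_contra hns
      apply h0
      have h1 := (Complex.abs_re_le_norm (u*z)); rw [abs_le] at h1
      simp only [Complex.mem_slitPlane_iff, not_or, Complex.sub_re, Complex.one_re,
        Complex.sub_im, Complex.one_im] at hns
      apply Complex.ext
      · simp only [Complex.sub_re, Complex.one_re, Complex.zero_re]; linarith [h1.2, hns.1]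
      · simpa using hns.2

lemma GoodF.blaschke {w : ℂ} (hw : ‖w‖ < 1) :
    GoodF (fun z => (z - w) / (1 - (starRingEnd ℂ) w * z)) := by
  have hne : ∀ z ∈ closedBall (0:ℂ) 1, 1 - (starRingEnd ℂ) w * z ≠ 0 := by
    intro z hz h
    have h1 : (starRingEnd ℂ) w * z = 1 := by linear_combination -h
    have := congrArg norm h1
    rw [norm_mul, RCLike.norm_conj, norm_one] at this
    have : ‖z‖ ≤ 1 := by simpa using hz
    nlinarith [norm_nonneg w, norm_nonneg z]
  refine ⟨_, fun _ => 1, ?_, diffContOnCl_const, fun z _ => (mul_one _).symm, ?_⟩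
  · apply DifferentiableOn.diffContOnCl
    rw [closure_ball _ one_ne_zero]
    intro z hz
    exact (DifferentiableAt.div (c := fun z => z - w) (d := fun z => 1 - (starRingEnd ℂ) w * z)
      (by fun_prop) (by fun_prop) (hne z hz)).differentiableWithinAt
  · intro z hz
    have : ‖(z - w) / (1 - (starRingEnd ℂ) w * z)‖ = 1 := by
      rw [norm_div, div_eq_one_iff_eq (norm_ne_zero_iff.2 (hne z (by simp [hz])))]
      have e : z - w = z * (starRingEnd ℂ) (1 - (starRingEnd ℂ) w * z) := by
        have : z * (starRingEnd ℂ) z = 1 := by rw [Complex.mul_conj']; simp [hz]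
        simp only [map_sub, map_one, map_mul, Complex.conj_conj]
        linear_combination w * this
      rw [e, norm_mul, hz, RCLike.norm_conj, one_mul]
    simp only [this]; simp

lemma GoodF.linear (w : ℂ) : GoodF (fun z => z - w) := by
  rcases lt_or_ge ‖w‖ 1 with hw | hw
  · refine ((GoodF.blaschke hw).mul (GoodF.one_sub (u := (starRingEnd ℂ) w)
      (by simpa using hw.le))).congr ?_
    intro z hz
    apply div_mul_cancel₀
    intro h
    have h1 : (starRingEnd ℂ) w * z = 1 := by linear_combination -h
    have := congrArg norm h1
    rw [norm_mul, RCLike.norm_conj, norm_one] at this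
    have : ‖z‖ ≤ 1 := by simpa using hz
    nlinarith [norm_nonneg w, norm_nonneg z]
  · have hw0 : w ≠ 0 := by rintro rfl; simp at hw; linarith
    refine ((GoodF.const (-w)).mul (GoodF.one_sub (u := w⁻¹)
      (by rw [norm_inv]; exact inv_le_one_of_one_le₀ hw))).congr ?_
    intro z _
    field_simp; ring

lemma GoodF.poly (p : Polynomial ℂ) : GoodF (fun z => p.eval z) := by
  rw [(IsAlgClosed.splits p).eq_prod_roots]
  generalize p.roots = s
  simp only [Polynomial.eval_mul, Polynomial.eval_C]
  refine (GoodF.const _).mul ?_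
  induction s using Multiset.induction_on with
  | empty => simpa using GoodF.const 1
  | cons a s ih => simpa using (GoodF.linear a).mul ih


lemma h2_bessel {g : ℂ → ℂ} (hg : DiffContOnCl ℂ g (ball 0 1)) :
    ∃ b : ℕ → ℂ, (∀ z ∈ ball (0:ℂ) 1, HasSum (fun n => b n * z ^ n) (g z)) ∧
      ∀ N, ∑ n ∈ Finset.range N, ‖b n‖ ^ 2 ≤
        (2 * Real.pi)⁻¹ * ∫ θ in (0:ℝ)..(2 * Real.pi), ‖g (Complex.exp (θ * Complex.I))‖ ^ 2 := by
  have hcont : Continuous fun θ : ℝ => g (Complex.exp (θ * Complex.I)) := by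
    have h1 := hg.continuousOn_ball
    exact h1.comp_continuous (by fun_prop) (fun θ => by simp)
  refine ⟨fun n => fourierCoeffOn Real.two_pi_pos
    (fun θ : ℝ => g (Complex.exp (θ * Complex.I))) n, ?_, ?_⟩
  · intro z hz
    have h := DiffContOnCl.hasFPowerSeriesOnBall (R := 1) (f := g) (c := 0) (by simpa using hg)
      one_pos
    have h2 := h.hasSum (y := z) (by
      rw [ENNReal.coe_one, ← ENNReal.ofReal_one, Metric.eball_ofReal]; exact hz)
    rw [zero_add] at h2
    refine h2.congr_fun ?_
    intro n
    beta_reduce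
    rw [cauchyPowerSeries_apply, fourierCoeffOn_eq_integral]
    simp only [circleIntegral, sub_zero, smul_eq_mul, deriv_circleMap, NNReal.coe_one, one_div,
      Complex.real_smul]
    rw [mul_assoc, mul_comm _ (z ^ n), ← intervalIntegral.integral_const_mul,
      ← intervalIntegral.integral_const_mul, ← intervalIntegral.integral_const_mul]
    apply intervalIntegral.integral_congr
    intro θ _
    have e : (fourier (-(n:ℤ)) (θ : AddCircle (2 * Real.pi - 0)) : ℂ)
        = (Complex.exp (θ * Complex.I) ^ n)⁻¹ := by
      rw [fourier_coe_apply, ← Complex.exp_nat_mul, ← Complex.exp_neg]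
      congr 1
      push_cast
      rw [sub_zero]
      have : (Real.pi : ℂ) ≠ 0 := by exact_mod_cast Real.pi_ne_zero
      field_simp
    have hE := Complex.exp_ne_zero (θ * Complex.I)
    have hp : (Real.pi : ℂ) ≠ 0 := by exact_mod_cast Real.pi_ne_zero
    have hI := Complex.I_ne_zero
    simp only [circleMap, zero_add, Complex.ofReal_one, one_mul]
    rw [e]
    push_cast
    rw [div_pow]
    field_simp
  · intro N
    have hL2 : MemLp (fun θ : ℝ => g (Complex.exp (θ * Complex.I))) 2
        (volume.restrict (Ioc 0 (2 * Real.pi))) := by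
      have : MemLp (fun θ : ℝ => g (Complex.exp (θ * Complex.I))) 2
        (volume.restrict (Icc 0 (2 * Real.pi))) :=
        by
          obtain ⟨B, hB⟩ := isCompact_Icc.exists_bound_of_continuousOn
            (s := Icc 0 (2 * Real.pi)) hcont.continuousOn
          exact MemLp.of_bound hcont.aestronglyMeasurable B
            ((ae_restrict_iff' measurableSet_Icc).2 (ae_of_all _ hB))
      exact this.mono_measure (Measure.restrict_mono Ioc_subset_Icc_self le_rfl)
    have h := hasSum_sq_fourierCoeffOn Real.two_pi_pos hL2
    have h2 := sum_le_hasSum ((Finset.range N).map ⟨fun n : ℕ => (n:ℤ), Nat.cast_injective⟩)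
      (fun i _ => by positivity) h
    simpa using h2

/-- Schur test row sum. -/
lemma schur_row (N i : ℕ) : ∑ j ∈ Finset.range N, 1 / (((i:ℝ) + j + 1) * √(j + 1)) ≤
    6 / √(i + 1) := by
  have key1 : ∀ n : ℕ, ∑ j ∈ Finset.range n, 1 / √((j:ℝ) + 1) ≤ 2 * √n := by
    intro n
    induction n with
    | zero => simp
    | succ n ih =>
      rw [Finset.sum_range_succ]
      have h1 : 1 / √((n:ℝ)+1) ≤ 2 * (√((n:ℝ)+1) - √n) := by
        have hp : 0 < √((n:ℝ)+1) := by positivity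
        rw [div_le_iff₀ hp]
        have a1 := Real.sq_sqrt (show (0:ℝ) ≤ n + 1 by positivity)
        have a2 := Real.sq_sqrt (show (0:ℝ) ≤ n by positivity)
        nlinarith [sq_nonneg (√((n:ℝ)+1) - √n)]
      push_cast
      linarith
  have key2 : ∀ m : ℕ, ∑ j ∈ Finset.range m, 1 / (((i:ℝ) + 1 + j + 1) * √(i + 1 + j + 1)) ≤
      2 / √((i:ℝ)+1) - 2 / √((i:ℝ) + 1 + m) := by
    intro m
    induction m with
    | zero => simp
    | succ m ih =>
      rw [Finset.sum_range_succ]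
      have h1 : 1 / (((i:ℝ) + 1 + m + 1) * √(i + 1 + m + 1)) ≤
          2 / √((i:ℝ) + 1 + m) - 2 / √((i:ℝ) + 1 + m + 1) := by
        set x : ℝ := (i:ℝ) + 1 + m
        have hx : 0 < x := by positivity
        have a1 := Real.sq_sqrt (show (0:ℝ) ≤ x + 1 by positivity)
        have a2 := Real.sq_sqrt hx.le
        have p1 : 0 < √(x+1) := by positivity
        have p2 : 0 < √x := by positivity
        set u := √(x+1)
        set v := √x
        have hvu : v ≤ u := Real.sqrt_le_sqrt (by linarith)
        rw [← a1, div_sub_div _ _ p2.ne' p1.ne', div_le_div_iff₀ (by positivity) (by positivity)]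
        have : (u - v) * (u + v) = 1 := by nlinarith
        have h3 : 1 ≤ 2 * u * (u - v) := by nlinarith
        have : 1 * (v * u) ≤ (2 * u * (u - v)) * (u * u) := by
          apply mul_le_mul h3 (by nlinarith) (by positivity) (by nlinarith)
        nlinarith
      push_cast
      rw [← add_assoc ((i:ℝ)+1)]
      linarith
  have hpos : ∀ j : ℕ, 0 ≤ 1 / (((i:ℝ) + j + 1) * √(j + 1)) := fun j => by positivity
  have hs : 0 < √((i:ℝ)+1) := by positivity
  calc _ ≤ ∑ j ∈ Finset.range ((i+1) + N), 1 / (((i:ℝ) + j + 1) * √(j + 1)) :=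
        Finset.sum_le_sum_of_subset_of_nonneg (by
          intro j hj; simp at hj ⊢; omega) (fun j _ _ => hpos j)
    _ = ∑ j ∈ Finset.range (i+1), 1 / (((i:ℝ) + j + 1) * √(j + 1)) +
        ∑ j ∈ Finset.range N, 1 / (((i:ℝ) + (i+1+j : ℕ) + 1) * √((i+1+j : ℕ) + 1)) := by
        rw [Finset.sum_range_add]
    _ ≤ 2 / √((i:ℝ)+1) + 2 / √((i:ℝ)+1) := by
        apply add_le_add
        · calc _ ≤ ∑ j ∈ Finset.range (i+1), (1 / ((i:ℝ)+1)) * (1 / √((j:ℝ) + 1)) := by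
                apply Finset.sum_le_sum
                intro j _
                rw [← one_div_mul_one_div]
                apply mul_le_mul_of_nonneg_right _ (by positivity)
                apply one_div_le_one_div_of_le (by positivity)
                have : (0:ℝ) ≤ j := by positivity
                linarith
            _ ≤ (1 / ((i:ℝ)+1)) * (2 * √((i+1:ℕ):ℝ)) := by
                rw [← Finset.mul_sum]
                exact mul_le_mul_of_nonneg_left (key1 _) (by positivity)
            _ = _ := by
                push_cast
                have a1 := Real.sq_sqrt (show (0:ℝ) ≤ i + 1 by positivity)
                field_simp
                linarith
        · refine le_trans (Finset.sum_le_sum fun j _ => ?_) ((key2 N).trans ?_)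
          · push_cast
            apply one_div_le_one_div_of_le (by positivity)
            rw [← add_assoc ((i:ℝ)) ]
            apply mul_le_mul_of_nonneg_right _ (by positivity)
            have : (0:ℝ) ≤ i := by positivity
            linarith
          · have : 0 ≤ 2 / √((i:ℝ) + 1 + N) := by positivity
            linarith
    _ ≤ _ := by
        rw [← add_div]; gcongr; norm_num

lemma hilbert_ineq (N : ℕ) (x y : ℕ → ℝ) :
    ∑ i ∈ Finset.range N, ∑ j ∈ Finset.range N, x i * y j / ((i:ℝ) + j + 1) ≤
      3 * (∑ i ∈ Finset.range N, x i ^ 2 + ∑ i ∈ Finset.range N, y i ^ 2) := by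
  have pt : ∀ i j : ℕ, x i * y j / ((i:ℝ) + j + 1) ≤
      1/2 * (x i ^ 2 * √(i+1) * (1 / (((i:ℝ) + j + 1) * √(j + 1)))) +
      1/2 * (y j ^ 2 * √(j+1) * (1 / (((j:ℝ) + i + 1) * √(i + 1)))) := by
    intro i j
    have p1 : 0 < √((i:ℝ)+1) := by positivity
    have p2 : 0 < √((j:ℝ)+1) := by positivity
    have p3 : (0:ℝ) < (i:ℝ) + j + 1 := by positivity
    rw [add_comm (j:ℝ) i]
    set u := √((i:ℝ)+1)
    set v := √((j:ℝ)+1)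
    have : 1/2 * (x i ^ 2 * u * (1 / (((i:ℝ) + j + 1) * v))) +
      1/2 * (y j ^ 2 * v * (1 / (((i:ℝ) + j + 1) * u))) - x i * y j / ((i:ℝ) + j + 1)
      = (x i * u - y j * v) ^ 2 / (2 * ((i:ℝ) + j + 1) * u * v) := by
      field_simp; ring
    have h2 : 0 ≤ (x i * u - y j * v) ^ 2 / (2 * ((i:ℝ) + j + 1) * u * v) := by positivity
    linarith
  have row : ∀ z : ℕ → ℝ, ∑ i ∈ Finset.range N, ∑ j ∈ Finset.range N,
      1/2 * (z i ^ 2 * √(i+1) * (1 / (((i:ℝ) + j + 1) * √(j + 1)))) ≤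
      3 * ∑ i ∈ Finset.range N, z i ^ 2 := by
    intro z
    rw [Finset.mul_sum]
    apply Finset.sum_le_sum
    intro i _
    rw [← Finset.mul_sum, ← Finset.mul_sum]
    have p1 : 0 < √((i:ℝ)+1) := by positivity
    calc _ ≤ 1/2 * (z i ^ 2 * √(i+1) * (6 / √(i+1))) := by
          gcongr; exact schur_row N i
      _ = _ := by field_simp; ring
  calc _ ≤ ∑ i ∈ Finset.range N, ∑ j ∈ Finset.range N,
      (1/2 * (x i ^ 2 * √(i+1) * (1 / (((i:ℝ) + j + 1) * √(j + 1)))) +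
      1/2 * (y j ^ 2 * √(j+1) * (1 / (((j:ℝ) + i + 1) * √(i + 1))))) :=
        Finset.sum_le_sum fun i _ => Finset.sum_le_sum fun j _ => pt i j
    _ ≤ _ := by
      simp only [Finset.sum_add_distrib]
      rw [mul_add]
      apply add_le_add (row x)
      rw [Finset.sum_comm]
      exact row y

lemma hardy_poly (p : Polynomial ℂ) (N : ℕ) :
    ∑ k ∈ Finset.range N, ‖p.coeff k‖ / (k + 1) ≤
      6 * ((2 * Real.pi)⁻¹ * ∫ θ in (0:ℝ)..(2 * Real.pi), ‖p.eval (Complex.exp (θ * Complex.I))‖) := by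
  obtain ⟨g, h, hg, hh, e, bd⟩ := GoodF.poly p
  obtain ⟨b, hb, hb2⟩ := h2_bessel hg
  obtain ⟨c, hc, hc2⟩ := h2_bessel hh
  have hco : p.coeff = fun k => ∑ ij ∈ Finset.HasAntidiagonal.antidiagonal k, b ij.1 * c ij.2 := by
    apply ps_unique (f := fun z => p.eval z)
    · intro z _
      have := hasSum_sum_of_ne_finset_zero (f := fun n => p.coeff n * z ^ n) (s := p.support)
        (L := .unconditional ℕ)
        (by intro n hn; simp at hn; simp [hn])
      rw [Polynomial.eval_eq_sum]; exact this
    · intro z hz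
      simp only [e z (ball_subset_closedBall hz)]
      have h1 := hb z hz
      have h2 := hc z hz
      have h3 := summable_norm_sum_mul_antidiagonal_of_summable_norm h1.summable.norm h2.summable.norm
      have h4 := tsum_mul_tsum_eq_tsum_sum_antidiagonal_of_summable_norm h1.summable.norm h2.summable.norm
      rw [h1.tsum_eq, h2.tsum_eq] at h4
      rw [h4]
      refine h3.of_norm.hasSum.congr_fun ?_
      intro n
      rw [Finset.sum_mul]
      apply Finset.sum_congr rfl
      intro ij hij
      rw [← Finset.HasAntidiagonal.mem_antidiagonal.1 hij, pow_add]; ring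
  have hb3 := hb2 N
  have hc3 := hc2 N
  have eb : ∀ θ : ℝ, ‖g (Complex.exp (θ * Complex.I))‖ ^ 2 =
      ‖p.eval (Complex.exp (θ * Complex.I))‖ := fun θ => (bd _ (by simp)).1
  have ec : ∀ θ : ℝ, ‖h (Complex.exp (θ * Complex.I))‖ ^ 2 =
      ‖p.eval (Complex.exp (θ * Complex.I))‖ := fun θ => (bd _ (by simp)).2
  simp only [eb] at hb3
  simp only [ec] at hc3
  have hH := hilbert_ineq N (fun i => ‖b i‖) (fun i => ‖c i‖)
  refine le_trans ?_ (hH.trans (by linarith))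
  calc _ ≤ ∑ k ∈ Finset.range N, ∑ ij ∈ Finset.HasAntidiagonal.antidiagonal k,
        ‖b ij.1‖ * ‖c ij.2‖ / ((ij.1:ℝ) + ij.2 + 1) := by
        apply Finset.sum_le_sum
        intro k _
        rw [hco]
        have : ∑ ij ∈ Finset.HasAntidiagonal.antidiagonal k, ‖b ij.1‖ * ‖c ij.2‖ / ((ij.1:ℝ) + ij.2 + 1)
          = (∑ ij ∈ Finset.HasAntidiagonal.antidiagonal k, ‖b ij.1‖ * ‖c ij.2‖) / (k + 1) := by
          rw [Finset.sum_div]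
          apply Finset.sum_congr rfl
          intro ij hij
          rw [← Finset.HasAntidiagonal.mem_antidiagonal.1 hij]; push_cast; rfl
        rw [this]
        gcongr
        refine (norm_sum_le _ _).trans (le_of_eq ?_)
        simp
    _ = ∑ x ∈ (Finset.range N).sigma (fun k => Finset.HasAntidiagonal.antidiagonal k),
        ‖b x.2.1‖ * ‖c x.2.2‖ / ((x.2.1:ℝ) + x.2.2 + 1) := by
        rw [Finset.sum_sigma]
    _ ≤ ∑ ij ∈ (Finset.range N) ×ˢ (Finset.range N),
        ‖b ij.1‖ * ‖c ij.2‖ / ((ij.1:ℝ) + ij.2 + 1) := by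
        rw [← Finset.sum_image (g := fun x : (Σ _ : ℕ, ℕ × ℕ) => x.2)
          (f := fun ij : ℕ × ℕ => ‖b ij.1‖ * ‖c ij.2‖ / ((ij.1:ℝ) + ij.2 + 1))]
        · apply Finset.sum_le_sum_of_subset_of_nonneg
          · intro ij hij
            simp only [Finset.mem_image, Finset.mem_sigma, Finset.HasAntidiagonal.mem_antidiagonal] at hij
            obtain ⟨x, hx, rfl⟩ := hij
            simp only [Finset.mem_product, Finset.mem_range] at hx ⊢
            omega
          · intros; positivity
        · rintro ⟨k, ij⟩ hx ⟨k', ij'⟩ hy hxy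
          simp at hx hy hxy
          subst hxy
          obtain rfl : k = k' := by rw [← hx.2, ← hy.2]
          rfl
    _ = _ := by rw [Finset.sum_product]

open Filter Topology in
lemma hardy_ineq {c : ℕ → ℂ} {f : ℂ → ℂ} {M : ℝ}
    (h : ∀ z ∈ ball (0:ℂ) 1, HasSum (fun n => c n * z ^ n) (f z))
    (hM : ∀ r ∈ Ico (0:ℝ) 1, (2 * Real.pi)⁻¹ * ∫ θ in (0:ℝ)..(2 * Real.pi),
      ‖f (r * Complex.exp (θ * Complex.I))‖ ≤ M) (N : ℕ) :
    ∑ k ∈ Finset.range N, ‖c k‖ / (k + 1) ≤ 6 * M := by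
  have hfc : ContinuousOn f (ball 0 1) := (ps_diff h).continuousOn
  have step : ∀ r ∈ Ico (0:ℝ) 1, ∑ k ∈ Finset.range N, ‖c k‖ * r ^ k / (k + 1) ≤ 6 * M := by
    intro r hr
    have hrn : ‖(r:ℂ)‖ = r := by simp [abs_of_nonneg hr.1]
    have hsum : Summable (fun n => ‖c n‖ * r ^ n) := by
      have := (h (r:ℂ) (by rw [mem_ball_zero_iff, hrn]; exact hr.2)).summable.norm
      simpa [norm_mul, hrn, abs_of_nonneg hr.1] using this
    apply _root_.le_of_forall_pos_le_add
    intro ε hε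
    have ht := (tendsto_sum_nat_add (fun n => ‖c n‖ * r ^ n))
    have hev := (ht.eventually (gt_mem_nhds (show (0:ℝ) < ε / 6 by positivity))).and
      (eventually_ge_atTop N)
    obtain ⟨m, hm, hmN⟩ := hev.exists
    let p : Polynomial ℂ := ∑ k ∈ Finset.range m, Polynomial.monomial k (c k * (r:ℂ) ^ k)
    have hpc : ∀ k < m, p.coeff k = c k * (r:ℂ) ^ k := by
      intro k hk
      simp only [p, Polynomial.finsetSum_coeff, Polynomial.coeff_monomial]
      rw [Finset.sum_ite_eq']; simp [hk]
    have hpe : ∀ z : ℂ, p.eval z = ∑ k ∈ Finset.range m, c k * (r * z) ^ k := by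
      intro z
      simp only [p, Polynomial.eval_finsetSum, Polynomial.eval_monomial]
      exact Finset.sum_congr rfl fun k _ => by rw [mul_pow]; ring
    have hH := hardy_poly p N
    have hin : ∀ θ : ℝ, (r:ℂ) * Complex.exp (θ * Complex.I) ∈ ball (0:ℂ) 1 := by
      intro θ; rw [mem_ball_zero_iff, norm_mul, hrn]; simp [hr.2]
    have hpt : ∀ θ : ℝ, ‖p.eval (Complex.exp (θ * Complex.I))‖ ≤
        ‖f (r * Complex.exp (θ * Complex.I))‖ + ε / 6 := by
      intro θ
      have hs := h _ (hin θ)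
      have e1 : p.eval (Complex.exp (θ * Complex.I)) = f (r * Complex.exp (θ * Complex.I)) -
          ∑' k, c (k + m) * (r * Complex.exp (θ * Complex.I)) ^ (k + m) := by
        rw [hpe, ← hs.tsum_eq, ← hs.summable.sum_add_tsum_nat_add m]; ring
      rw [e1]
      refine (norm_sub_le _ _).trans (add_le_add_right ?_ _)
      refine le_trans (tsum_of_norm_bounded (((summable_nat_add_iff m).2 hsum).hasSum) ?_) hm.le
      intro k
      simp [abs_of_nonneg hr.1]
    have hint : ∫ θ in (0:ℝ)..(2 * Real.pi), ‖p.eval (Complex.exp (θ * Complex.I))‖ ≤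
        (∫ θ in (0:ℝ)..(2 * Real.pi), ‖f (r * Complex.exp (θ * Complex.I))‖) +
          (2 * Real.pi) * (ε/6) := by
      have hci : IntervalIntegrable (fun θ : ℝ => ‖f (r * Complex.exp (θ * Complex.I))‖) volume
          0 (2 * Real.pi) := by
        apply Continuous.intervalIntegrable
        exact (hfc.comp_continuous (by fun_prop) hin).norm
      calc _ ≤ ∫ θ in (0:ℝ)..(2 * Real.pi), (‖f (r * Complex.exp (θ * Complex.I))‖ + ε / 6) := by
            apply intervalIntegral.integral_mono_on Real.two_pi_pos.le _ _ (fun θ _ => hpt θ)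
            · apply Continuous.intervalIntegrable
              exact (p.continuous.comp (by fun_prop)).norm
            · exact hci.add (by simp)
        _ = _ := by
            rw [intervalIntegral.integral_add hci (by simp)]; simp; ring
    have h5 := hM r hr
    have h6 : (2 * Real.pi)⁻¹ * ∫ θ in (0:ℝ)..(2 * Real.pi),
        ‖p.eval (Complex.exp (θ * Complex.I))‖ ≤ M + ε / 6 := by
      have := mul_le_mul_of_nonneg_left hint (show 0 ≤ (2 * Real.pi)⁻¹ by positivity)
      rw [mul_add, inv_mul_cancel_left₀ (by positivity)] at this
      linarith
    calc _ = ∑ k ∈ Finset.range N, ‖p.coeff k‖ / (k + 1) := by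
          apply Finset.sum_congr rfl
          intro k hk
          rw [hpc k (by simp at hk; omega)]; simp [abs_of_nonneg hr.1]
      _ ≤ _ := by linarith
  have hlim : Tendsto (fun r : ℝ => ∑ k ∈ Finset.range N, ‖c k‖ * r ^ k / (k + 1)) (𝓝[<] 1)
      (𝓝 (∑ k ∈ Finset.range N, ‖c k‖ * 1 ^ k / (k + 1))) := by
    apply tendsto_nhdsWithin_of_tendsto_nhds
    apply Continuous.tendsto (f := fun r : ℝ => ∑ k ∈ Finset.range N, ‖c k‖ * r ^ k / (k + 1))
    fun_prop
  have := le_of_tendsto hlim (b := 6 * M) (by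
    filter_upwards [Ico_mem_nhdsLT (show (0:ℝ) < 1 by norm_num)] with r hr using step r hr)
  simpa using this


lemma kernel_normsq (s θ : ℝ) : ‖(1:ℂ) - s * Complex.exp (θ * Complex.I)‖ ^ 2 =
    (1 - s) ^ 2 + 2 * s * (1 - Real.cos θ) := by
  rw [← Complex.normSq_eq_norm_sq, Complex.normSq_apply]
  simp [Complex.exp_ofReal_mul_I_re, Complex.exp_ofReal_mul_I_im]
  linear_combination s ^ 2 * Real.sin_sq_add_cos_sq θ

lemma kernel_lower {s θ : ℝ} (hs : s ∈ Ico (0:ℝ) 1) (h0 : 0 ≤ θ) (hp : θ ≤ Real.pi) :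
    (1 - s + θ) / (2 * Real.pi) ≤ ‖(1:ℂ) - s * Complex.exp (θ * Complex.I)‖ := by
  have hpi := Real.pi_pos
  have hpi3 := Real.pi_gt_three
  apply le_of_sq_le_sq _ (norm_nonneg _)
  rw [kernel_normsq, div_pow, div_le_iff₀ (by positivity)]
  have hc := Real.cos_le_one_sub_mul_cos_sq (x := θ) (by rw [abs_of_nonneg h0]; exact hp)
  have hc2 : 2 * θ ^ 2 ≤ (1 - Real.cos θ) * Real.pi ^ 2 := by
    have : 2 / Real.pi ^ 2 * θ ^ 2 ≤ 1 - Real.cos θ := by linarith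
    rwa [div_mul_eq_mul_div, div_le_iff₀ (by positivity)] at this
  have h1s : 0 < 1 - s := by linarith [hs.2]
  have h3 : 2 * s * (2 * θ ^ 2) ≤ 2 * s * ((1 - Real.cos θ) * Real.pi ^ 2) :=
    mul_le_mul_of_nonneg_left hc2 (by linarith [hs.1])
  have h4 : (1 - s + θ) ^ 2 ≤ 2 * ((1 - s) ^ 2 + θ ^ 2) := by nlinarith [sq_nonneg (1 - s - θ)]
  have h5 : θ ^ 2 ≤ Real.pi ^ 2 := by gcongr
  have h6 : (1 - s) ^ 2 * θ ^ 2 ≤ (1 - s) ^ 2 * Real.pi ^ 2 := by gcongr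
  have h7 : (1 - s) ^ 2 * 1 ≤ (1 - s) ^ 2 * Real.pi ^ 2 := by
    gcongr; nlinarith
  have h8 : θ ^ 2 * (2 - 2 * (1 - s) ^ 2 - 16 * s) ≤ 0 := by
    apply mul_nonpos_of_nonneg_of_nonpos (sq_nonneg _)
    nlinarith [hs.1, hs.2]
  nlinarith

lemma kernel_upper {s θ : ℝ} (hs : s ∈ Ico (0:ℝ) 1) (h0 : 0 ≤ θ) (hp : θ ≤ 2 * Real.pi) :
    ‖(1:ℂ) - s * Complex.exp (θ * Complex.I)‖⁻¹ ≤
      2 * Real.pi / (1 - s + θ) ∨ ‖(1:ℂ) - s * Complex.exp (θ * Complex.I)‖⁻¹ ≤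
      2 * Real.pi / (1 - s + (2 * Real.pi - θ)) := by
  have hpi := Real.pi_pos
  have h1s : 0 < 1 - s := by linarith [hs.2]
  rcases le_total θ Real.pi with h | h
  · left
    rw [← inv_div]
    exact inv_anti₀ (by positivity) (kernel_lower hs h0 h)
  · right
    have e : ‖(1:ℂ) - s * Complex.exp (θ * Complex.I)‖ =
        ‖(1:ℂ) - s * Complex.exp (((2 * Real.pi - θ : ℝ) : ℂ) * Complex.I)‖ := by
      rw [← sq_eq_sq₀ (norm_nonneg _) (norm_nonneg _), kernel_normsq, kernel_normsq,
        Real.cos_two_pi_sub]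
    rw [e, ← inv_div]
    have : 0 ≤ 2 * Real.pi - θ := by linarith
    exact inv_anti₀ (by positivity) (kernel_lower hs (by linarith) (by linarith))

lemma kernel_ne {s : ℝ} (hs : s ∈ Ico (0:ℝ) 1) (θ : ℝ) :
    (1:ℂ) - s * Complex.exp (θ * Complex.I) ≠ 0 := by
  intro h
  have h1 : (s:ℂ) * Complex.exp (θ * Complex.I) = 1 := by linear_combination -h
  have := congrArg norm h1
  simp [abs_of_nonneg hs.1] at this
  linarith [hs.2]

lemma kernel_cont {s : ℝ} (hs : s ∈ Ico (0:ℝ) 1) :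
    Continuous fun θ : ℝ => ‖(1:ℂ) - s * Complex.exp (θ * Complex.I)‖⁻¹ :=
  Continuous.inv₀ (by fun_prop) (fun θ => norm_ne_zero_iff.2 (kernel_ne hs θ))

lemma int_inv {c : ℝ} (hc : 0 < c) :
    ∫ θ in (0:ℝ)..(2 * Real.pi), 1 / (c + θ) = Real.log ((c + 2 * Real.pi) / c) := by
  have hpi := Real.pi_pos
  rw [intervalIntegral.integral_comp_add_left (fun x => 1 / x) c, add_zero, integral_one_div]
  rw [uIcc_of_le (by linarith)]
  simp; intro h; linarith

lemma int_inv_sq {c : ℝ} (hc : 0 < c) :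
    ∫ θ in (0:ℝ)..(2 * Real.pi), 1 / (c + θ) ^ 2 ≤ 1 / c := by
  have hpi := Real.pi_pos
  have : ∫ θ in (0:ℝ)..(2 * Real.pi), 1 / (c + θ) ^ 2 = (-(c + 2 * Real.pi)⁻¹) - (-(c + 0)⁻¹) := by
    apply intervalIntegral.integral_eq_sub_of_hasDerivAt (f := fun θ => -(c + θ)⁻¹)
    · intro x hx
      rw [uIcc_of_le (by linarith)] at hx
      have hne : c + x ≠ 0 := by linarith [hx.1]
      have h1 : HasDerivAt (fun θ => c + θ) 1 x := (hasDerivAt_id x).const_add c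
      have := (h1.inv hne).neg
      have e : 1 / (c + x) ^ 2 = -(-1 / (c + x) ^ 2) := by rw [neg_div, neg_neg]
      rw [e]; exact this
    · apply ContinuousOn.intervalIntegrable
      rw [uIcc_of_le (by linarith)]
      intro x hx
      have hne : (c + x) ^ 2 ≠ 0 := pow_ne_zero _ (by linarith [hx.1])
      exact (ContinuousAt.div (f := fun _ => (1:ℝ)) (g := fun x => (c + x) ^ 2) (by fun_prop)
        (by fun_prop) hne).continuousWithinAt
  rw [this]
  have : 0 < (c + 2 * Real.pi)⁻¹ := by positivity
  simp; linarith

lemma int_refl (F : ℝ → ℝ) : ∫ θ in (0:ℝ)..(2 * Real.pi), F (2 * Real.pi - θ) =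
    ∫ θ in (0:ℝ)..(2 * Real.pi), F θ := by
  rw [intervalIntegral.integral_comp_sub_left]; simp

lemma contOn_aux {c : ℝ} (hc : 0 < c) (n : ℕ) :
    IntervalIntegrable (fun θ : ℝ => 1 / (c + θ) ^ n) volume 0 (2 * Real.pi) := by
  have hpi := Real.pi_pos
  apply ContinuousOn.intervalIntegrable
  rw [uIcc_of_le (by linarith)]
  intro x hx
  have hne : (c + x) ^ n ≠ 0 := pow_ne_zero _ (by linarith [hx.1])
  exact (ContinuousAt.div (f := fun _ => (1:ℝ)) (g := fun x => (c + x) ^ n) (by fun_prop)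
    (by fun_prop) hne).continuousWithinAt

lemma kernel_int_le {s : ℝ} (hs : s ∈ Ico (0:ℝ) 1) (n : ℕ) :
    ∫ θ in (0:ℝ)..(2 * Real.pi), (‖(1:ℂ) - s * Complex.exp (θ * Complex.I)‖⁻¹) ^ n ≤
      2 * (2 * Real.pi) ^ n * ∫ θ in (0:ℝ)..(2 * Real.pi), 1 / (1 - s + θ) ^ n := by
  have hpi := Real.pi_pos
  have h1s : 0 < 1 - s := by linarith [hs.2]
  have i1 := (contOn_aux h1s n).const_mul ((2 * Real.pi) ^ n)
  have i2 : IntervalIntegrable (fun θ : ℝ => (2 * Real.pi) ^ n * (1 / (1 - s + (2 * Real.pi - θ)) ^ n))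
      volume 0 (2 * Real.pi) := by
    have := i1.comp_sub_left (2 * Real.pi)
    simpa using this.symm
  calc _ ≤ ∫ θ in (0:ℝ)..(2 * Real.pi), ((2 * Real.pi) ^ n * (1 / (1 - s + θ) ^ n) +
        (2 * Real.pi) ^ n * (1 / (1 - s + (2 * Real.pi - θ)) ^ n)) := by
        apply intervalIntegral.integral_mono_on (by linarith)
          (((kernel_cont hs).pow n).intervalIntegrable _ _) (i1.add i2)
        intro θ hθ
        have p1 : 0 < 1 - s + θ := by linarith [hθ.1]
        have p2 : 0 < 1 - s + (2 * Real.pi - θ) := by linarith [hθ.2]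
        have q1 : 0 ≤ (2 * Real.pi) ^ n * (1 / (1 - s + θ) ^ n) := by positivity
        have q2 : 0 ≤ (2 * Real.pi) ^ n * (1 / (1 - s + (2 * Real.pi - θ)) ^ n) := by positivity
        rcases kernel_upper hs hθ.1 hθ.2 with h | h
        · have := pow_le_pow_left₀ (by positivity) h n
          rw [div_pow, div_eq_mul_one_div] at this
          simp only [Pi.pow_apply]
          linarith
        · have := pow_le_pow_left₀ (by positivity) h n
          rw [div_pow, div_eq_mul_one_div] at this
          simp only [Pi.pow_apply]
          linarith
    _ = _ := by
        rw [intervalIntegral.integral_add i1 i2, intervalIntegral.integral_const_mul,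
          intervalIntegral.integral_const_mul, int_refl (fun x => 1 / (1 - s + x) ^ n)]
        ring

lemma kernel_int1 {s t : ℝ} (hs : s ∈ Ico (0:ℝ) 1) (hst : s ≤ t) (ht : t < 1) :
    ∫ θ in (0:ℝ)..(2 * Real.pi), ‖(1:ℂ) - s * Complex.exp (θ * Complex.I)‖⁻¹ ≤
      12 * Real.pi * Real.log (2 / (1 - t)) := by
  have hpi := Real.pi_pos
  have hpi4 := Real.pi_lt_d2
  have h1s : 0 < 1 - s := by linarith [hs.2]
  have h1t : 0 < 1 - t := by linarith
  have h := kernel_int_le hs 1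
  simp only [pow_one] at h
  rw [int_inv h1s] at h
  refine h.trans ?_
  have : Real.log ((1 - s + 2 * Real.pi) / (1 - s)) ≤ 3 * Real.log (2 / (1 - t)) := by
    rw [← Nat.cast_ofNat (n := 3), ← Real.log_pow]
    apply Real.log_le_log (by positivity)
    calc (1 - s + 2 * Real.pi) / (1 - s) ≤ 8 / (1 - s) := by
          gcongr; linarith [hs.1]
      _ ≤ 8 / (1 - t) := by gcongr
      _ ≤ (2 / (1 - t)) ^ 3 := by
          rw [div_pow]; norm_num
          apply div_le_div_of_nonneg_left (by norm_num) (by positivity)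
          have : 1 - t ≤ 1 := by linarith [hs.1]
          calc (1 - t) ^ 3 ≤ (1 - t) ^ 1 := pow_le_pow_of_le_one h1t.le this (by norm_num)
            _ = _ := pow_one _
  nlinarith

lemma kernel_int2 {s : ℝ} (hs : s ∈ Ico (0:ℝ) 1) :
    ∫ θ in (0:ℝ)..(2 * Real.pi), (‖(1:ℂ) - s * Complex.exp (θ * Complex.I)‖⁻¹) ^ 2 ≤
      8 * Real.pi ^ 2 / (1 - s) := by
  have h1s : 0 < 1 - s := by linarith [hs.2]
  refine (kernel_int_le hs 2).trans ?_
  have := mul_le_mul_of_nonneg_left (int_inv_sq h1s)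
    (show 0 ≤ 2 * (2 * Real.pi) ^ 2 by positivity)
  refine this.trans (le_of_eq (by ring))


lemma circMean_one (f : ℂ → ℂ) (r : ℝ) : circMean 1 f r =
    (2 * Real.pi)⁻¹ * ∫ θ in (0:ℝ)..(2 * Real.pi), ‖f (r * Complex.exp (θ * Complex.I))‖ := by
  simp [circMean]

lemma circMean_le_norm {f : ℂ → ℂ} (hf : MemHardy 1 f) {r : ℝ} (hr : r ∈ Ico (0:ℝ) 1) :
    circMean 1 f r ≤ hardyNorm 1 f := by
  obtain ⟨M, hM⟩ := hf.2
  exact le_csSup ⟨M, by rintro x ⟨r, hr, rfl⟩; exact hM r hr⟩ ⟨r, hr, rfl⟩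

lemma norm_le_of {f : ℂ → ℂ} {B : ℝ} (h : ∀ r ∈ Ico (0:ℝ) 1, circMean 1 f r ≤ B) :
    hardyNorm 1 f ≤ B := by
  have hne : {x : ℝ | ∃ r ∈ Ico (0:ℝ) 1, x = circMean 1 f r}.Nonempty :=
    ⟨circMean 1 f 0, 0, by simp, rfl⟩
  refine csSup_le hne ?_
  rintro x ⟨r, hr, rfl⟩; exact h r hr

lemma hardy_sum {f : ℂ → ℂ} (hf : MemHardy 1 f) {c : ℕ → ℂ}
    (h : ∀ z ∈ ball (0:ℂ) 1, HasSum (fun n => c n * z ^ n) (f z)) (N : ℕ) :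
    ∑ k ∈ Finset.range N, ‖c k‖ / (k + 1) ≤ 6 * hardyNorm 1 f :=
  hardy_ineq h (fun r hr => by rw [← circMean_one]; exact circMean_le_norm hf hr) N

/-- test function -/
def fa (a : ℝ) : ℂ → ℂ := fun z => ((1 - a ^ 2 : ℝ) : ℂ) / (1 - a * z) ^ 2

lemma fa_sum {a : ℝ} (ha : a ∈ Ico (0:ℝ) 1) : ∀ z ∈ ball (0:ℂ) 1,
    HasSum (fun n : ℕ => (((1 - a ^ 2) * ((n + 1) * a ^ n) : ℝ) : ℂ) * z ^ n) (fa a z) := by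
  intro z hz
  have hn : ‖(a:ℂ) * z‖ < 1 := by
    rw [norm_mul]; simp [abs_of_nonneg ha.1]
    have : ‖z‖ < 1 := by simpa using hz
    nlinarith [ha.1, ha.2, norm_nonneg z]
  have := (hasSum_choose_mul_geometric_of_norm_lt_one 1 hn).mul_left ((1 - a ^ 2 : ℝ) : ℂ)
  rw [mul_one_div] at this
  refine this.congr_fun ?_
  intro n
  simp [mul_pow]; ring

lemma fa_hardy {a : ℝ} (ha : a ∈ Ico (0:ℝ) 1) :
    ∀ r ∈ Ico (0:ℝ) 1, circMean 1 (fa a) r ≤ 8 * Real.pi := by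
  intro r hr
  have hpi := Real.pi_pos
  have hs : a * r ∈ Ico (0:ℝ) 1 := ⟨mul_nonneg ha.1 hr.1, by nlinarith [ha.1, ha.2, hr.1, hr.2]⟩
  have h1a : 0 < 1 - a := by linarith [ha.2]
  have h1s : 0 < 1 - a * r := by linarith [hs.2]
  have hle : 1 - a ≤ 1 - a * r := by nlinarith [ha.1, hr.2]
  have h1a2 : 0 ≤ 1 - a ^ 2 := by nlinarith [ha.1, ha.2]
  rw [circMean_one]
  have e : ∀ θ : ℝ, ‖fa a (r * Complex.exp (θ * Complex.I))‖ = (1 - a ^ 2) *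
      (‖(1:ℂ) - (a * r : ℝ) * Complex.exp (θ * Complex.I)‖⁻¹) ^ 2 := by
    intro θ
    rw [fa, norm_div, norm_pow, Complex.norm_real, Real.norm_of_nonneg h1a2, inv_pow,
      div_eq_mul_inv]
    push_cast
    rw [mul_assoc (a:ℂ)]
  simp only [e]
  rw [intervalIntegral.integral_const_mul]
  calc _ ≤ (2 * Real.pi)⁻¹ * ((1 - a ^ 2) * (8 * Real.pi ^ 2 / (1 - a * r))) := by
        gcongr; exact kernel_int2 hs
    _ = 4 * Real.pi * ((1 - a ^ 2) / (1 - a * r)) := by field_simp; ring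
    _ ≤ 4 * Real.pi * 2 := by
        gcongr
        rw [div_le_iff₀ h1s]
        nlinarith [ha.1, ha.2]
    _ = _ := by ring

lemma mom_lower (μ : Measure ℝ) [IsFiniteMeasure μ] {a : ℝ} (ha : a ∈ Ico (0:ℝ) 1) (n : ℕ) :
    a ^ n * (μ (Ico a 1)).toReal ≤ mom μ n := by
  have hint : IntegrableOn (fun t : ℝ => t ^ n) (Ico 0 1) μ := by
    refine Measure.integrableOn_of_bounded (M := 1) (measure_ne_top _ _) (by fun_prop) ?_
    refine (ae_restrict_iff' measurableSet_Ico).2 (ae_of_all _ fun t ht => ?_)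
    rw [norm_pow, Real.norm_of_nonneg ht.1]
    exact pow_le_one₀ ht.1 ht.2.le
  have hsub : Ico a 1 ⊆ Ico 0 1 := Ico_subset_Ico_left ha.1
  calc a ^ n * (μ (Ico a 1)).toReal = ∫ t in Ico a 1, a ^ n ∂μ := by
        simp [Measure.real, mul_comm]
    _ ≤ ∫ t in Ico a 1, t ^ n ∂μ := by
        apply setIntegral_mono_on (by simp) (hint.mono_set hsub) measurableSet_Ico
        intro t ht
        exact pow_le_pow_left₀ ha.1 ht.1 n
    _ ≤ _ := by
        apply setIntegral_mono_set hint
        · refine (ae_restrict_iff' measurableSet_Ico).2 (ae_of_all _ fun t ht => ?_)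
          exact pow_nonneg ht.1 n
        · exact hsub.eventuallyLE

lemma mom_nonneg (μ : Measure ℝ) (n : ℕ) : 0 ≤ mom μ n :=
  setIntegral_nonneg measurableSet_Ico fun t ht => pow_nonneg ht.1 n

open Filter Topology in
lemma forward (μ : Measure ℝ) [IsFiniteMeasure μ]
    (h1 : ∀ f : ℂ → ℂ, MemHardy 1 f → HmuWD μ f ∧ MemHardy 1 (Hmu μ f))
    (h2 : ∃ C > 0, ∀ f : ℂ → ℂ, MemHardy 1 f → hardyNorm 1 (Hmu μ f) ≤ C * hardyNorm 1 f) :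
    IsLogCarleson μ 1 1 := by
  obtain ⟨C, hC, hb⟩ := h2
  have hpi := Real.pi_pos
  have main : ∀ a ∈ Ico (0:ℝ) 1, (μ (Ico a 1)).toReal * (-Real.log (1 - a)) ≤
      6 * (C * (8 * Real.pi)) * (2 * (1 - a)) := by
    intro a ha
    set m := (μ (Ico a 1)).toReal with hm
    have hm0 : 0 ≤ m := ENNReal.toReal_nonneg
    have h1a2 : 0 < 1 - a ^ 2 := by nlinarith [ha.1, ha.2]
    have hfa : MemHardy 1 (fa a) := ⟨ps_diff (fa_sum ha), _, fa_hardy ha⟩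
    have htc : tc (fa a) = fun n : ℕ => (((1 - a ^ 2) * ((n + 1) * a ^ n) : ℝ) : ℂ) :=
      ps_unique (tc_hasSum hfa.1) (fa_sum ha)
    obtain ⟨wd, hH⟩ := h1 _ hfa
    have hsum : ∀ z ∈ ball (0:ℂ) 1, HasSum (fun n => hmuCoeff μ (fa a) n * z ^ n)
        (Hmu μ (fa a) z) := fun z hz => (wd.2 z hz).of_norm.hasSum
    have hnorm : hardyNorm 1 (Hmu μ (fa a)) ≤ C * (8 * Real.pi) :=
      (hb _ hfa).trans (mul_le_mul_of_nonneg_left (norm_le_of (fa_hardy ha)) hC.le)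
    have hco : ∀ n, a ^ n * m / (1 - a ^ 2) ≤ ‖hmuCoeff μ (fa a) n‖ := by
      intro n
      have e1 : ∀ k : ℕ, (mom μ (n + k) : ℂ) * tc (fa a) k =
          ((mom μ (n + k) * ((1 - a ^ 2) * ((k + 1) * a ^ k)) : ℝ) : ℂ) := by
        intro k; rw [htc]; push_cast; ring
      have hs := (wd.1 n).of_norm
      rw [hmuCoeff]
      simp only [e1] at hs ⊢
      have hs' : Summable fun k : ℕ => mom μ (n + k) * ((1 - a ^ 2) * ((k + 1) * a ^ k)) := by
        exact_mod_cast hs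
      rw [← Complex.ofReal_tsum, Complex.norm_real]
      refine le_trans ?_ (Real.le_norm_self _)
      have hn : ‖a ^ 2‖ < 1 := by rw [Real.norm_of_nonneg (sq_nonneg a)]; linarith
      have hg := (hasSum_choose_mul_geometric_of_norm_lt_one 1 hn).mul_left
        (a ^ n * m * (1 - a ^ 2))
      have e2 : a ^ n * m * (1 - a ^ 2) * (1 / (1 - a ^ 2) ^ (1 + 1)) =
          a ^ n * m / (1 - a ^ 2) := by field_simp
      rw [e2] at hg
      refine hasSum_le ?_ hg hs'.hasSum
      intro k
      have := mom_lower μ ha (n + k)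
      have h0 : 0 ≤ (1 - a ^ 2) * (((k:ℝ) + 1) * a ^ k) := by
        have := pow_nonneg ha.1 k
        positivity
      have := mul_le_mul_of_nonneg_right this h0
      refine le_trans (le_of_eq ?_) this
      simp; ring
    have hpart : ∀ N, ∑ n ∈ Finset.range N, m / (1 - a ^ 2) * (a ^ (n + 1) / ((n:ℝ) + 1)) ≤
        6 * (C * (8 * Real.pi)) := by
      intro N
      refine le_trans (Finset.sum_le_sum ?_) ((hardy_sum hH hsum N).trans
        (mul_le_mul_of_nonneg_left hnorm (by norm_num)))
      intro n _
      have hpn := pow_nonneg ha.1 n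
      calc m / (1 - a ^ 2) * (a ^ (n + 1) / ((n:ℝ) + 1)) ≤
          m / (1 - a ^ 2) * (a ^ n / ((n:ℝ) + 1)) := by
            gcongr m / (1 - a ^ 2) * (?_ / _)
            rw [pow_succ]; nlinarith [ha.2]
        _ = (a ^ n * m / (1 - a ^ 2)) / (n + 1) := by ring
        _ ≤ _ := by gcongr; exact hco n
    have hlog := (Real.hasSum_pow_div_log_of_abs_lt_one
      (by rw [abs_of_nonneg ha.1]; exact ha.2)).mul_left (m / (1 - a ^ 2))
    have hfin := le_of_tendsto' hlog.tendsto_sum_nat hpart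
    rw [div_mul_eq_mul_div, div_le_iff₀ h1a2] at hfin
    refine hfin.trans ?_
    gcongr
    nlinarith [ha.1, ha.2]
  set K := 6 * (C * (8 * Real.pi)) with hK
  have hKpos : 0 < K := by positivity
  set T := (μ univ).toReal
  have hT : 0 ≤ T := ENNReal.toReal_nonneg
  refine ⟨4 * K + 4 * T, by positivity, ?_⟩
  intro t ht
  rw [Real.rpow_one, Real.rpow_one]
  have h1t : 0 < 1 - t := by linarith [ht.2]
  have hm0 : 0 ≤ (μ (Ico t 1)).toReal := ENNReal.toReal_nonneg
  have hmT : (μ (Ico t 1)).toReal ≤ T :=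
    ENNReal.toReal_mono (measure_ne_top _ _) (measure_mono (subset_univ _))
  have hl2 : Real.log 2 ≤ 1 := by linarith [Real.log_two_lt_d9]
  rw [Real.log_div (by norm_num) h1t.ne']
  rcases le_total t (1/2) with h | h
  · have : -Real.log (1 - t) ≤ Real.log 2 := by
      rw [← Real.log_inv]
      apply Real.log_le_log (by positivity)
      rw [inv_le_comm₀ h1t (by norm_num)]; linarith
    calc _ ≤ T * 2 := by
          apply mul_le_mul hmT (by linarith) _ hT
          have : Real.log (1 - t) ≤ 0 := Real.log_nonpos h1t.le (by linarith [ht.1])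
          have := Real.log_nonneg (show (1:ℝ) ≤ 2 by norm_num)
          linarith
      _ ≤ _ := by nlinarith
  · have : Real.log 2 ≤ -Real.log (1 - t) := by
      rw [← Real.log_inv]
      apply Real.log_le_log (by positivity)
      rw [le_inv_comm₀ (by norm_num) h1t]; linarith
    calc _ ≤ (μ (Ico t 1)).toReal * (2 * (-Real.log (1 - t))) := by
          gcongr; linarith
      _ ≤ _ := by
          have := main t ht
          nlinarith


lemma log_ge {t : ℝ} (ht : t ∈ Ico (0:ℝ) 1) : Real.log 2 ≤ Real.log (2 / (1 - t)) := by
  have h1 : 0 < 1 - t := by linarith [ht.2]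
  apply Real.log_le_log (by norm_num)
  rw [le_div_iff₀ h1]; linarith [ht.1]

/-- derivative of the log moment function -/
def dpsi (k : ℕ) (s : ℝ) : ℝ := k * s ^ (k - 1) * Real.log (2 / (1 - s)) + s ^ k * (1 - s)⁻¹

lemma dpsi_meas (k : ℕ) : Measurable (dpsi k) := by unfold dpsi; fun_prop

lemma dpsi_nonneg (k : ℕ) {s : ℝ} (hs : s ∈ Ico (0:ℝ) 1) : 0 ≤ dpsi k s := by
  have h1 : 0 < 1 - s := by linarith [hs.2]
  have h0 := hs.1
  have := (Real.log_nonneg one_le_two).trans (log_ge hs)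
  unfold dpsi; positivity

lemma psi_ftc (k : ℕ) {t : ℝ} (ht : t ∈ Ico (0:ℝ) 1) :
    ENNReal.ofReal (t ^ k * Real.log (2 / (1 - t))) ≤
      ENNReal.ofReal (0 ^ k * Real.log 2) + ∫⁻ s in Ioc 0 t, ENNReal.ofReal (dpsi k s) := by
  have hcont : ContinuousOn (dpsi k) (uIcc 0 t) := by
    rw [uIcc_of_le ht.1]
    intro x hx
    have h1 : 1 - x ≠ 0 := by linarith [hx.2, ht.2]
    unfold dpsi
    have h2 : 2 / (1 - x) ≠ 0 := by positivity
    apply ContinuousAt.continuousWithinAt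
    fun_prop (disch := assumption)
  have hI : IntervalIntegrable (dpsi k) volume 0 t := hcont.intervalIntegrable
  have key : ∫ s in (0:ℝ)..t, dpsi k s =
      t ^ k * Real.log (2 / (1 - t)) - 0 ^ k * Real.log (2 / (1 - 0)) := by
    apply intervalIntegral.integral_eq_sub_of_hasDerivAt
      (f := fun t => t ^ k * Real.log (2 / (1 - t)))
    · intro x hx
      rw [uIcc_of_le ht.1] at hx
      have h1 : 1 - x ≠ 0 := by linarith [hx.2, ht.2]
      have d1 : HasDerivAt (fun t : ℝ => 1 - t) (-1) x := (hasDerivAt_id x).const_sub 1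
      have d2 : HasDerivAt (fun t : ℝ => 2 / (1 - t)) (2 / (1 - x) ^ 2) x := by
        have := (hasDerivAt_const x (2:ℝ)).div d1 h1
        have e : (2:ℝ) / (1 - x) ^ 2 = (0 * (1 - x) - 2 * -1) / (1 - x) ^ 2 := by ring
        rw [e]; exact this
      have d3 := d2.log (by positivity)
      have d4 := (hasDerivAt_pow k x).mul d3
      have e : dpsi k x = ↑k * x ^ (k - 1) * Real.log (2 / (1 - x)) +
          x ^ k * (2 / (1 - x) ^ 2 / (2 / (1 - x))) := by
        unfold dpsi; congr 2; field_simp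
      rw [e]; exact d4
    · exact hI
  have e2 : t ^ k * Real.log (2 / (1 - t)) =
      0 ^ k * Real.log 2 + ∫ s in (0:ℝ)..t, dpsi k s := by
    rw [key]; norm_num
  rw [e2]
  refine ENNReal.ofReal_add_le.trans (add_le_add le_rfl (le_of_eq ?_))
  rw [intervalIntegral.integral_of_le ht.1]
  rw [ofReal_integral_eq_lintegral_ofReal]
  · exact (intervalIntegrable_iff_integrableOn_Ioc_of_le ht.1).1 hI
  · refine (ae_restrict_iff' measurableSet_Ioc).2 (ae_of_all _ fun s hs => ?_)
    exact dpsi_nonneg k ⟨hs.1.le, hs.2.trans_lt ht.2⟩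

lemma dpsi_int (k : ℕ) {C0 : ℝ} (hC0 : 0 < C0) :
    ∫⁻ s in Ico (0:ℝ) 1, ENNReal.ofReal
      (C0 * (k * s ^ (k - 1) * (1 - s) + s ^ k / Real.log 2)) ≤
    ENNReal.ofReal (C0 * (1 + 1 / Real.log 2) / (k + 1)) := by
  have hl : 0 < Real.log 2 := Real.log_pos one_lt_two
  have hc : Continuous fun s : ℝ => C0 * (k * s ^ (k - 1) * (1 - s) + s ^ k / Real.log 2) := by
    fun_prop
  rw [restrict_Ico_eq_restrict_Ioc, ← ofReal_integral_eq_lintegral_ofReal,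
    ← intervalIntegral.integral_of_le zero_le_one]
  · apply ENNReal.ofReal_le_ofReal
    have := intervalIntegral.integral_eq_sub_of_hasDerivAt (a := 0) (b := 1)
      (f := fun s : ℝ => C0 * (s ^ k - k / (k + 1) * s ^ (k + 1) +
        s ^ (k + 1) / ((k + 1) * Real.log 2)))
      (f' := fun s : ℝ => C0 * (k * s ^ (k - 1) * (1 - s) + s ^ k / Real.log 2)) ?_
      (hc.intervalIntegrable _ _)
    · rw [this]
      have h0 : (0:ℝ) ≤ 0 ^ k := by positivity
      have hz : (0:ℝ) ^ (k + 1) = 0 := by simp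
      simp only [one_pow, hz]
      have e : C0 * (1 + 1 / Real.log 2) / (k + 1) =
        C0 * (1 - k / (k + 1) * 1 + 1 / ((k + 1) * Real.log 2)) := by
        field_simp; ring
      rw [e]
      have : 0 ≤ C0 * 0 ^ k := by positivity
      simp only [mul_zero, zero_div, sub_zero, add_zero]
      linarith
    · intro x _
      have d1 := hasDerivAt_pow k x
      have d2 := hasDerivAt_pow (k + 1) x
      have d3 := ((d1.sub (d2.const_mul ((k:ℝ) / (k + 1)))).add
        (d2.div_const ((k + 1) * Real.log 2))).const_mul C0
      have e : C0 * (k * x ^ (k - 1) * (1 - x) + x ^ k / Real.log 2) =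
        C0 * (↑k * x ^ (k - 1) - ↑k / (↑k + 1) * (↑(k + 1) * x ^ (k + 1 - 1)) +
            ↑(k + 1) * x ^ (k + 1 - 1) / ((↑k + 1) * Real.log 2)) := by
        rcases k with _ | k
        · simp
        · simp only [Nat.add_sub_cancel]
          push_cast
          field_simp
          ring
      rw [e]; exact d3
  · exact (intervalIntegrable_iff_integrableOn_Ioc_of_le zero_le_one).1
      (hc.intervalIntegrable _ _)
  · refine (ae_restrict_iff' measurableSet_Ioc).2 (ae_of_all _ fun s hs => ?_)
    have h1 : 0 ≤ 1 - s := by linarith [hs.2]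
    have h0 := hs.1.le
    simp only [Pi.zero_apply]
    positivity

lemma nu_bound (μ : Measure ℝ) [IsFiniteMeasure μ] (h : IsLogCarleson μ 1 1) :
    ∃ C1 > 0, ∀ k : ℕ, ∫⁻ t in Ico (0:ℝ) 1, ENNReal.ofReal (t ^ k * Real.log (2 / (1 - t))) ∂μ
      ≤ ENNReal.ofReal (C1 / (k + 1)) := by
  obtain ⟨C0, hC0, hC⟩ := h
  have hl : 0 < Real.log 2 := Real.log_pos one_lt_two
  refine ⟨Real.log 2 * (μ univ).toReal + C0 * (1 + 1 / Real.log 2), by positivity, fun k => ?_⟩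
  rw [add_div, ENNReal.ofReal_add (by positivity) (by positivity)]
  calc ∫⁻ t in Ico (0:ℝ) 1, ENNReal.ofReal (t ^ k * Real.log (2 / (1 - t))) ∂μ
      ≤ ∫⁻ t in Ico (0:ℝ) 1, (ENNReal.ofReal (0 ^ k * Real.log 2) +
          ∫⁻ s in Ico (0:ℝ) 1, {p : ℝ × ℝ | p.2 ≤ p.1}.indicator
            (fun p => ENNReal.ofReal (dpsi k p.2)) (t, s)) ∂μ := by
        apply setLIntegral_mono' measurableSet_Ico
        intro t ht
        refine (psi_ftc k ht).trans (add_le_add le_rfl ?_)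
        rw [← lintegral_indicator measurableSet_Ioc, ← lintegral_indicator measurableSet_Ico]
        apply lintegral_mono
        intro s
        by_cases hs : s ∈ Ioc 0 t
        · have h1 : s ∈ Ico (0:ℝ) 1 := ⟨hs.1.le, hs.2.trans_lt ht.2⟩
          have h2 : (t, s) ∈ {p : ℝ × ℝ | p.2 ≤ p.1} := hs.2
          simp only [indicator_of_mem hs, indicator_of_mem h1, indicator_of_mem h2, le_refl]
        · simp only [indicator_of_notMem hs]; exact zero_le
    _ = ENNReal.ofReal (0 ^ k * Real.log 2) * μ (Ico 0 1) +
          ∫⁻ s in Ico (0:ℝ) 1, ∫⁻ t in Ico (0:ℝ) 1, {p : ℝ × ℝ | p.2 ≤ p.1}.indicator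
            (fun p => ENNReal.ofReal (dpsi k p.2)) (t, s) ∂μ := by
        rw [lintegral_add_left measurable_const, setLIntegral_const]
        congr 1
        apply lintegral_lintegral_swap
        apply Measurable.aemeasurable
        apply Measurable.indicator
        · exact ((dpsi_meas k).comp measurable_snd).ennreal_ofReal
        · exact measurableSet_le measurable_snd measurable_fst
    _ ≤ _ := by
        apply add_le_add
        · rw [← ENNReal.ofReal_toReal (measure_ne_top μ (Ico 0 1)), ← ENNReal.ofReal_mul (by positivity)]
          apply ENNReal.ofReal_le_ofReal
          have hm : (μ (Ico 0 1)).toReal ≤ (μ univ).toReal :=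
            ENNReal.toReal_mono (measure_ne_top _ _) (measure_mono (subset_univ _))
          rcases k with _ | k
          · simp only [pow_zero, one_mul, Nat.cast_zero, zero_add, div_one]
            gcongr
          · simp only [ne_eq, Nat.add_eq_zero_iff, one_ne_zero, and_false, not_false_eq_true,
              zero_pow, zero_mul]
            positivity
        · refine le_trans ?_ (dpsi_int k hC0)
          apply setLIntegral_mono' measurableSet_Ico
          intro s hs
          have e : ∀ t, {p : ℝ × ℝ | p.2 ≤ p.1}.indicator
              (fun p => ENNReal.ofReal (dpsi k p.2)) (t, s) =
              (Ici s).indicator (fun _ => ENNReal.ofReal (dpsi k s)) t := by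
            intro t
            simp only [indicator, mem_ofPred_eq, mem_Ici]
          simp only [e]
          rw [lintegral_indicator measurableSet_Ici, setLIntegral_const,
            Measure.restrict_apply measurableSet_Ici]
          have e3 : Ici s ∩ Ico 0 1 = Ico s 1 := by
            ext x; simp only [mem_inter_iff, mem_Ici, mem_Ico]
            constructor
            · rintro ⟨a, b, c⟩; exact ⟨a, c⟩
            · rintro ⟨a, c⟩; exact ⟨a, hs.1.trans a, c⟩
          rw [e3, ← ENNReal.ofReal_toReal (measure_ne_top μ (Ico s 1)),
            ← ENNReal.ofReal_mul (dpsi_nonneg k hs)]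
          apply ENNReal.ofReal_le_ofReal
          have hcs := hC s hs
          rw [Real.rpow_one, Real.rpow_one] at hcs
          have hL := log_ge hs
          have h1 : 0 < 1 - s := by linarith [hs.2]
          have h0 := hs.1
          set m := (μ (Ico s 1)).toReal with hm
          have hm0 : 0 ≤ m := ENNReal.toReal_nonneg
          have b1 : m * Real.log 2 ≤ C0 * (1 - s) :=
            (mul_le_mul_of_nonneg_left hL hm0).trans hcs
          have b2 : m * (1 - s)⁻¹ ≤ C0 / Real.log 2 := by
            rw [← div_eq_mul_inv, div_le_div_iff₀ h1 hl]; exact b1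
          have b3 := mul_le_mul_of_nonneg_left b2 (pow_nonneg h0 k)
          have b4 := mul_le_mul_of_nonneg_left hcs
            (show 0 ≤ k * s ^ (k - 1) by positivity)
          unfold dpsi
          calc _ = k * s ^ (k - 1) * (m * Real.log (2 / (1 - s))) + s ^ k * (m * (1 - s)⁻¹) := by
                ring
            _ ≤ _ := add_le_add b4 b3
            _ = _ := by ring


lemma pow_intOn (μ : Measure ℝ) [IsFiniteMeasure μ] (n : ℕ) :
    IntegrableOn (fun t : ℝ => t ^ n) (Ico 0 1) μ := by
  refine Measure.integrableOn_of_bounded (M := 1) (measure_ne_top _ _) (by fun_prop) ?_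
  refine (ae_restrict_iff' measurableSet_Ico).2 (ae_of_all _ fun t ht => ?_)
  rw [norm_pow, Real.norm_of_nonneg ht.1]
  exact pow_le_one₀ ht.1 ht.2.le

lemma mom_anti (μ : Measure ℝ) [IsFiniteMeasure μ] (n k : ℕ) : mom μ (n + k) ≤ mom μ k := by
  apply setIntegral_mono_on (pow_intOn μ _) (pow_intOn μ _) measurableSet_Ico
  intro t ht
  exact pow_le_pow_of_le_one ht.1 ht.2.le (Nat.le_add_left _ _)

lemma mom_upper (μ : Measure ℝ) [IsFiniteMeasure μ] {C1 : ℝ} (hC1 : 0 < C1) {k : ℕ}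
    (h : ∫⁻ t in Ico (0:ℝ) 1, ENNReal.ofReal (t ^ k * Real.log (2 / (1 - t))) ∂μ
      ≤ ENNReal.ofReal (C1 / (k + 1))) : mom μ k ≤ C1 / Real.log 2 * (1 / (k + 1)) := by
  have hl : 0 < Real.log 2 := Real.log_pos one_lt_two
  have : ENNReal.ofReal (mom μ k * Real.log 2) ≤ ENNReal.ofReal (C1 / (k + 1)) := by
    refine le_trans ?_ h
    rw [mom, ← integral_mul_const, ofReal_integral_eq_lintegral_ofReal
      ((pow_intOn μ k).mul_const _)]
    · apply setLIntegral_mono' measurableSet_Ico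
      intro t ht
      exact ENNReal.ofReal_le_ofReal (mul_le_mul_of_nonneg_left (log_ge ht) (pow_nonneg ht.1 k))
    · refine (ae_restrict_iff' measurableSet_Ico).2 (ae_of_all _ fun t ht => ?_)
      exact mul_nonneg (pow_nonneg ht.1 k) hl.le
  have := (ENNReal.ofReal_le_ofReal_iff (by positivity)).1 this
  rw [← le_div_iff₀ hl] at this
  refine this.trans (le_of_eq ?_)
  field_simp

lemma G_bound (μ : Measure ℝ) [IsFiniteMeasure μ] (k : ℕ) {z : ℂ} (hz : ‖z‖ < 1) :
    ‖∑' n : ℕ, (mom μ (n + k) : ℂ) * z ^ n‖ₑ ≤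
      ∫⁻ t in Ico (0:ℝ) 1, ENNReal.ofReal (t ^ k * ‖1 - t * z‖⁻¹) ∂μ := by
  set F : ℕ → ℝ → ℂ := fun n t => ((t ^ (n + k) : ℝ) : ℂ) * z ^ n with hF
  have hint : ∀ n, Integrable (F n) (μ.restrict (Ico 0 1)) := fun n =>
    (pow_intOn μ (n + k)).ofReal.mul_const _
  have hn : ∀ n, ∫ t in Ico (0:ℝ) 1, ‖F n t‖ ∂μ = mom μ (n + k) * ‖z‖ ^ n := by
    intro n
    rw [mom, ← integral_mul_const]
    apply setIntegral_congr_fun measurableSet_Ico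
    intro t ht
    simp only [hF]
    rw [norm_mul, Complex.norm_real, Real.norm_of_nonneg (pow_nonneg ht.1 _), norm_pow]
  have hsum : Summable fun n => ∫ t in Ico (0:ℝ) 1, ‖F n t‖ ∂μ := by
    simp only [hn]
    refine Summable.of_nonneg_of_le (fun n => mul_nonneg (mom_nonneg μ _) (by positivity))
      (fun n => mul_le_mul_of_nonneg_right (mom_anti μ n k) (by positivity))
      ((summable_geometric_of_lt_one (norm_nonneg z) hz).mul_left _)
  have hs := hasSum_integral_of_summable_integral_norm hint hsum
  have hi : ∀ n, ∫ t in Ico (0:ℝ) 1, F n t ∂μ = (mom μ (n + k) : ℂ) * z ^ n := by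
    intro n
    simp only [hF]
    rw [integral_mul_const, integral_complex_ofReal, mom]
  simp only [hi] at hs
  rw [hs.tsum_eq]
  refine (enorm_integral_le_lintegral_enorm _).trans ?_
  apply setLIntegral_mono' measurableSet_Ico
  intro t ht
  have htz : ‖(t:ℂ) * z‖ < 1 := by
    rw [norm_mul, Complex.norm_real, Real.norm_of_nonneg ht.1]
    have := norm_nonneg z
    nlinarith [ht.1, ht.2]
  have : ∑' n, F n t = (t:ℂ) ^ k * (1 - t * z)⁻¹ := by
    rw [← tsum_geometric_of_norm_lt_one htz, ← tsum_mul_left]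
    congr 1; ext n; simp only [hF]; push_cast; ring
  rw [this, ← ofReal_norm_eq_enorm, norm_mul, norm_inv, norm_pow, Complex.norm_real,
    Real.norm_of_nonneg ht.1]

lemma Hmu_bound (μ : Measure ℝ) [IsFiniteMeasure μ] {f : ℂ → ℂ}
    (hs : Summable fun k => mom μ k * ‖tc f k‖) {z : ℂ} (hz : ‖z‖ < 1) :
    ‖Hmu μ f z‖ₑ ≤ ∑' k, ‖tc f k‖ₑ *
      ∫⁻ t in Ico (0:ℝ) 1, ENNReal.ofReal (t ^ k * ‖1 - t * z‖⁻¹) ∂μ := by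
  have hsum : Summable (Function.uncurry fun n k : ℕ => (mom μ (n + k) : ℂ) * tc f k * z ^ n) := by
    have h1 := (summable_geometric_of_lt_one (norm_nonneg z) hz).mul_of_nonneg hs
      (fun n => by positivity) (fun k => mul_nonneg (mom_nonneg μ _) (norm_nonneg _))
    refine Summable.of_norm_bounded h1 ?_
    rintro ⟨n, k⟩
    simp only [Function.uncurry]
    rw [norm_mul, norm_mul, Complex.norm_real, Real.norm_of_nonneg (mom_nonneg μ _), norm_pow,
      mul_comm]
    have := mom_anti μ n k
    gcongr
  have e : Hmu μ f z = ∑' k, tc f k * ∑' n, (mom μ (n + k) : ℂ) * z ^ n := by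
    calc Hmu μ f z = ∑' n, ∑' k, (mom μ (n + k) : ℂ) * tc f k * z ^ n := by
          simp only [Hmu, hmuCoeff, tsum_mul_right]
      _ = ∑' k, ∑' n, (mom μ (n + k) : ℂ) * tc f k * z ^ n := hsum.tsum_comm.symm
      _ = _ := by
          congr 1; ext k; rw [← tsum_mul_left]; congr 1; ext n; ring
  rw [e]
  refine enorm_tsum_le_tsum_enorm.trans ?_
  apply ENNReal.tsum_le_tsum
  intro k
  rw [enorm_mul]
  exact mul_le_mul_right (G_bound μ k hz) _

lemma Hmu_wd (μ : Measure ℝ) [IsFiniteMeasure μ] {f : ℂ → ℂ}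
    (hs : Summable fun k => mom μ k * ‖tc f k‖) : HmuWD μ f := by
  have hle : ∀ n k, ‖(mom μ (n + k) : ℂ) * tc f k‖ ≤ mom μ k * ‖tc f k‖ := by
    intro n k
    rw [norm_mul, Complex.norm_real, Real.norm_of_nonneg (mom_nonneg μ _)]
    exact mul_le_mul_of_nonneg_right (mom_anti μ n k) (norm_nonneg _)
  have h1 : ∀ n : ℕ, Summable fun k : ℕ => ‖(mom μ (n + k) : ℂ) * tc f k‖ := fun n =>
    Summable.of_nonneg_of_le (fun k => norm_nonneg _) (hle n) hs
  refine ⟨h1, fun z hz => ?_⟩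
  rw [mem_ball_zero_iff] at hz
  refine Summable.of_nonneg_of_le (fun k => norm_nonneg _) (fun n => ?_)
    ((summable_geometric_of_lt_one (norm_nonneg z) hz).mul_left (∑' k, mom μ k * ‖tc f k‖))
  rw [norm_mul, norm_pow]
  apply mul_le_mul_of_nonneg_right _ (by positivity)
  exact (norm_tsum_le_tsum_norm (h1 n)).trans ((h1 n).tsum_le_tsum (hle n) hs)

lemma kern_lint {r t : ℝ} (hr : r ∈ Ico (0:ℝ) 1) (ht : t ∈ Ico (0:ℝ) 1) :
    ∫⁻ θ in Ioc (0:ℝ) (2 * Real.pi),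
      ENNReal.ofReal (‖1 - t * (r * Complex.exp (θ * Complex.I))‖⁻¹) ≤
    ENNReal.ofReal (12 * Real.pi * Real.log (2 / (1 - t))) := by
  have hst : t * r ≤ t := by nlinarith [hr.2, ht.1]
  have hs : t * r ∈ Ico (0:ℝ) 1 := ⟨mul_nonneg ht.1 hr.1, hst.trans_lt ht.2⟩
  have e : ∀ θ : ℝ, ‖1 - t * (r * Complex.exp (θ * Complex.I))‖⁻¹ =
      ‖(1:ℂ) - (t * r : ℝ) * Complex.exp (θ * Complex.I)‖⁻¹ := by
    intro θ; push_cast; rw [mul_assoc]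
  simp only [e]
  have hc := kernel_cont hs
  rw [← ofReal_integral_eq_lintegral_ofReal]
  · rw [← intervalIntegral.integral_of_le (by positivity)]
    exact ENNReal.ofReal_le_ofReal (kernel_int1 hs hst ht.2)
  · exact (intervalIntegrable_iff_integrableOn_Ioc_of_le (by positivity)).1
      (hc.intervalIntegrable _ _)
  · exact ae_of_all _ fun θ => by simp only [Pi.zero_apply]; positivity

lemma Hmu_mean (μ : Measure ℝ) [IsFiniteMeasure μ] {f : ℂ → ℂ} {C1 : ℝ} (hC1 : 0 < C1)
    (hnu : ∀ k : ℕ, ∫⁻ t in Ico (0:ℝ) 1, ENNReal.ofReal (t ^ k * Real.log (2 / (1 - t))) ∂μ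
      ≤ ENNReal.ofReal (C1 / (k + 1)))
    (hs : Summable fun k => mom μ k * ‖tc f k‖)
    (ha : Summable fun k : ℕ => ‖tc f k‖ / (k + 1)) {r : ℝ} (hr : r ∈ Ico (0:ℝ) 1) :
    ∫⁻ θ in Ioc (0:ℝ) (2 * Real.pi), ‖Hmu μ f (r * Complex.exp (θ * Complex.I))‖ₑ ≤
      ENNReal.ofReal (12 * Real.pi * C1 * ∑' k : ℕ, ‖tc f k‖ / (k + 1)) := by
  have hpi := Real.pi_pos
  have hmeas : ∀ k : ℕ, Measurable (Function.uncurry fun θ t : ℝ =>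
      ENNReal.ofReal (t ^ k * ‖1 - t * (r * Complex.exp (θ * Complex.I))‖⁻¹)) := by
    intro k; unfold Function.uncurry; fun_prop
  calc _ ≤ ∫⁻ θ in Ioc (0:ℝ) (2 * Real.pi), ∑' k, ‖tc f k‖ₑ * ∫⁻ t in Ico (0:ℝ) 1,
          ENNReal.ofReal (t ^ k * ‖1 - t * (r * Complex.exp (θ * Complex.I))‖⁻¹) ∂μ := by
        apply lintegral_mono
        intro θ
        apply Hmu_bound μ hs
        rw [norm_mul, Complex.norm_exp_ofReal_mul_I, mul_one, Complex.norm_real,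
          Real.norm_of_nonneg hr.1]
        exact hr.2
    _ = ∑' k, ‖tc f k‖ₑ * ∫⁻ t in Ico (0:ℝ) 1, (∫⁻ θ in Ioc (0:ℝ) (2 * Real.pi),
          ENNReal.ofReal (t ^ k * ‖1 - t * (r * Complex.exp (θ * Complex.I))‖⁻¹)) ∂μ := by
        rw [lintegral_tsum]
        · congr 1; ext k
          rw [lintegral_const_mul _ (hmeas k).lintegral_prod_right]
          congr 1
          exact lintegral_lintegral_swap (hmeas k).aemeasurable
        · intro k
          exact ((hmeas k).lintegral_prod_right.const_mul _).aemeasurable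
    _ ≤ ∑' k : ℕ, ENNReal.ofReal (12 * Real.pi * C1 * (‖tc f k‖ / (k + 1))) := by
        apply ENNReal.tsum_le_tsum
        intro k
        have h1 : ∫⁻ t in Ico (0:ℝ) 1, (∫⁻ θ in Ioc (0:ℝ) (2 * Real.pi),
          ENNReal.ofReal (t ^ k * ‖1 - t * (r * Complex.exp (θ * Complex.I))‖⁻¹)) ∂μ ≤
          ENNReal.ofReal (12 * Real.pi) * ENNReal.ofReal (C1 / (k + 1)) := by
          refine le_trans ?_ (mul_le_mul_right (hnu k) _)
          rw [← lintegral_const_mul' _ _ ENNReal.ofReal_ne_top]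
          apply setLIntegral_mono' measurableSet_Ico
          intro t ht
          have h0 : 0 ≤ t ^ k := pow_nonneg ht.1 k
          simp only [ENNReal.ofReal_mul h0]
          rw [lintegral_const_mul' _ _ ENNReal.ofReal_ne_top]
          refine (mul_le_mul_right (kern_lint hr ht) _).trans (le_of_eq ?_)
          rw [ENNReal.ofReal_mul (by positivity)]
          ring
        refine (mul_le_mul_right h1 _).trans (le_of_eq ?_)
        rw [← ofReal_norm_eq_enorm, ← ENNReal.ofReal_mul (by positivity),
          ← ENNReal.ofReal_mul (by positivity)]
        congr 1; ring
    _ = _ := by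
        rw [← tsum_mul_left, ENNReal.ofReal_tsum_of_nonneg (fun k => by positivity)
          (ha.mul_left _)]

lemma backward (μ : Measure ℝ) [IsFiniteMeasure μ] (h : IsLogCarleson μ 1 1) :
    (∀ f : ℂ → ℂ, MemHardy 1 f → HmuWD μ f ∧ MemHardy 1 (Hmu μ f)) ∧
      ∃ C > 0, ∀ f : ℂ → ℂ, MemHardy 1 f → hardyNorm 1 (Hmu μ f) ≤ C * hardyNorm 1 f := by
  obtain ⟨C1, hC1, hnu⟩ := nu_bound μ h
  have hpi := Real.pi_pos
  have hl : 0 < Real.log 2 := Real.log_pos one_lt_two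
  have main : ∀ f : ℂ → ℂ, MemHardy 1 f → HmuWD μ f ∧
      DifferentiableOn ℂ (Hmu μ f) (ball (0:ℂ) 1) ∧
      ∀ r ∈ Ico (0:ℝ) 1, circMean 1 (Hmu μ f) r ≤ 36 * C1 * hardyNorm 1 f := by
    intro f hf
    have hN := hardy_sum hf (tc_hasSum hf.1)
    have ha : Summable fun k : ℕ => ‖tc f k‖ / (k + 1) :=
      summable_of_sum_range_le (fun k => by positivity) hN
    have hS : ∑' k : ℕ, ‖tc f k‖ / (k + 1) ≤ 6 * hardyNorm 1 f :=
      ha.tsum_le_of_sum_range_le hN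
    have hs : Summable fun k => mom μ k * ‖tc f k‖ := by
      refine Summable.of_nonneg_of_le (fun k => mul_nonneg (mom_nonneg μ _) (norm_nonneg _))
        (fun k => ?_) (ha.mul_left (C1 / Real.log 2))
      refine (mul_le_mul_of_nonneg_right (mom_upper μ hC1 (hnu k)) (norm_nonneg _)).trans
        (le_of_eq (by ring))
    have hwd := Hmu_wd μ hs
    have hd : DifferentiableOn ℂ (Hmu μ f) (ball (0:ℂ) 1) :=
      ps_diff (fun z hz => (hwd.2 z hz).of_norm.hasSum)
    refine ⟨hwd, hd, fun r hr => ?_⟩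
    have hm := Hmu_mean μ hC1 hnu hs ha hr
    have hS0 : 0 ≤ ∑' k : ℕ, ‖tc f k‖ / (k + 1) := tsum_nonneg fun k => by positivity
    have hI : ∫ θ in (0:ℝ)..(2 * Real.pi), ‖Hmu μ f (r * Complex.exp (θ * Complex.I))‖ ≤
        12 * Real.pi * C1 * ∑' k : ℕ, ‖tc f k‖ / (k + 1) := by
      rw [intervalIntegral.integral_of_le (by positivity)]
      have hcont : Continuous fun θ : ℝ => Hmu μ f (r * Complex.exp (θ * Complex.I)) := by
        refine hd.continuousOn.comp_continuous (by fun_prop) fun θ => ?_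
        rw [mem_ball_zero_iff, norm_mul, Complex.norm_exp_ofReal_mul_I, mul_one,
          Complex.norm_real, Real.norm_of_nonneg hr.1]
        exact hr.2
      rw [integral_norm_eq_lintegral_enorm hcont.aestronglyMeasurable]
      exact ENNReal.toReal_le_of_le_ofReal (by positivity) hm
    rw [circMean_one]
    calc (2 * Real.pi)⁻¹ * ∫ θ in (0:ℝ)..(2 * Real.pi), ‖Hmu μ f (r * Complex.exp (θ * Complex.I))‖
        ≤ (2 * Real.pi)⁻¹ * (12 * Real.pi * C1 * (6 * hardyNorm 1 f)) := by
          refine mul_le_mul_of_nonneg_left (hI.trans ?_) (by positivity)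
          exact mul_le_mul_of_nonneg_left hS (by positivity)
      _ = 36 * C1 * hardyNorm 1 f := by field_simp; ring
  exact ⟨fun f hf => ⟨(main f hf).1, (main f hf).2.1, _, (main f hf).2.2⟩,
    36 * C1, by positivity, fun f hf => norm_le_of (main f hf).2.2⟩


/-- Theorem 1.4 (i): `H_μ` is well defined and bounded on `H^1` iff `μ` is a
`1`-logarithmic `1`-Carleson measure. -/
theorem hmu_bounded_H1_iff (μ : Measure ℝ) [IsFiniteMeasure μ]
    (hsupp : μ (Ico (0:ℝ) 1)ᶜ = 0) :
    ((∀ f : ℂ → ℂ, MemHardy 1 f → HmuWD μ f ∧ MemHardy 1 (Hmu μ f)) ∧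
      ∃ C > 0, ∀ f : ℂ → ℂ, MemHardy 1 f → hardyNorm 1 (Hmu μ f) ≤ C * hardyNorm 1 f) ↔
    IsLogCarleson μ 1 1 := by
  exact ⟨fun h => forward μ h.1 h.2, fun h => backward μ h⟩

end PaperHankel
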